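/- arXiv:2011.02537 — 2 statements merged into one kernel-verified Lean document; each statement's English description precedes it below -/
import Mathlib

section
/- Let T = conv(v1, v2, v3) be a nondegenerate triangle in ℝ² and let m12, m23, m13 denote the midpoints of the segments [v1,v2], [v2,v3], [v1,v3]. Then the four closed subtriangles of the red refinement of T have pairwise disjoint interiors, their union equals T, and each of the four subtriangles has area equal to one quarter of the area of T. -/
noncomputable section

open MeasureTheory

/-- The Euclidean plane. -/
abbrev E2 : Type := EuclideanSpace ℝ (Fin 2)

/-- The (closed) triangle with vertices `a`, `b`, `c`. -/
def tri (a b c : E2) : Set E2 := convexHull ℝ {a, b, c}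

theorem mem_tri_iff (a b c x : E2) : x ∈ tri a b c ↔
    ∃ α β γ : ℝ, 0 ≤ α ∧ 0 ≤ β ∧ 0 ≤ γ ∧ α + β + γ = 1 ∧ x = α • a + β • b + γ • c := by
  constructor
  · intro hx
    unfold tri at hx
    rw [convexHull_insert (by simp)] at hx
    simp only [convexHull_pair, mem_convexJoin, Set.mem_singleton_iff, exists_eq_left] at hx
    obtain ⟨y, ⟨s, t, hs, ht, hst, rfl⟩, ⟨p, q, hp, hq, hpq, rfl⟩⟩ := hx
    refine ⟨p, q * s, q * t, hp, by positivity, by positivity, ?_, ?_⟩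
    · linear_combination q * hst + hpq
    · module
  · rintro ⟨α, β, γ, h1, h2, h3, h, rfl⟩
    have hc : Convex ℝ (tri a b c) := convex_convexHull ℝ _
    have ha : a ∈ tri a b c := subset_convexHull ℝ _ (by simp)
    have hb : b ∈ tri a b c := subset_convexHull ℝ _ (by simp)
    have hc' : c ∈ tri a b c := subset_convexHull ℝ _ (by simp)
    have := hc.sum_mem (t := Finset.univ) (w := ![α, β, γ]) (z := ![a, b, c])
      (by intro i _; fin_cases i <;> simp [*])
      (by simp [Fin.sum_univ_three, h]) (by intro i _; fin_cases i <;> simp [*])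
    simpa [Fin.sum_univ_three] using this

theorem disj_of_sep (g : E2 →ᵃ[ℝ] ℝ) (p q : E2) (hp : g p = 1) (hq : g q = 0) (A B : Set E2)
    (hA : ∀ x ∈ A, 1 / 2 ≤ g x) (hB : ∀ x ∈ B, g x ≤ 1 / 2) :
    Disjoint (interior A) (interior B) := by
  rw [Set.disjoint_left]
  intro x hxA hxB
  have hopen : interior A ∩ interior B ∈ nhds x :=
    Filter.inter_mem (isOpen_interior.mem_nhds hxA) (isOpen_interior.mem_nhds hxB)
  have hcont : Filter.Tendsto (fun t : ℝ => x + t • (p - q)) (nhds 0) (nhds x) := by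
    have : Continuous (fun t : ℝ => x + t • (p - q)) := by fun_prop
    simpa using this.tendsto 0
  have hev := hcont.eventually hopen
  obtain ⟨ε, hε, hb⟩ := Metric.eventually_nhds_iff.1 hev
  have hy := hb (y := ε / 2) (by rw [Real.dist_eq, sub_zero, abs_of_pos] <;> linarith)
  have e1 : g (x + (ε / 2) • (p - q)) = g x + ε / 2 := by
    have h1 := g.map_vadd x ((ε / 2) • (p - q))
    have h2 := g.linearMap_vsub p q
    simp only [vsub_eq_sub, vadd_eq_add, map_smul, hp, hq] at h1 h2
    rw [add_comm, h1, h2]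
    simp; ring
  have h1 := hB _ (interior_subset hy.2)
  have h2 := hA _ (interior_subset hxA)
  linarith

theorem g_tri_ge (g : E2 →ᵃ[ℝ] ℝ) (a b c : E2) (r : ℝ) (ha : r ≤ g a) (hb : r ≤ g b)
    (hc : r ≤ g c) : ∀ x ∈ tri a b c, r ≤ g x := by
  have h : tri a b c ⊆ g ⁻¹' Set.Ici r :=
    convexHull_min (by rintro x (rfl | rfl | rfl) <;> assumption)
      ((convex_Ici r).affine_preimage g)
  exact h

theorem g_tri_le (g : E2 →ᵃ[ℝ] ℝ) (a b c : E2) (r : ℝ) (ha : g a ≤ r) (hb : g b ≤ r)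
    (hc : g c ≤ r) : ∀ x ∈ tri a b c, g x ≤ r := by
  have h : tri a b c ⊆ g ⁻¹' Set.Iic r :=
    convexHull_min (by rintro x (rfl | rfl | rfl) <;> assumption)
      ((convex_Iic r).affine_preimage g)
  exact h

theorem mid_eq (a b : E2) : midpoint ℝ a b = (1 / 2 : ℝ) • a + (1 / 2 : ℝ) • b := by
  rw [midpoint_eq_smul_add]; norm_num

theorem vol_homothety (z a b c a' b' c' : E2) (r : ℝ) (hr : |r ^ 2| = 1 / 4)
    (ha : a' = AffineMap.homothety z r a) (hb : b' = AffineMap.homothety z r b)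
    (hc : c' = AffineMap.homothety z r c) :
    volume (tri a' b' c') = volume (tri a b c) / 4 := by
  have h : tri a' b' c' = AffineMap.homothety z r '' tri a b c := by
    unfold tri
    rw [AffineMap.image_convexHull, Set.image_insert_eq, Set.image_insert_eq,
      Set.image_singleton, ha, hb, hc]
  rw [h, Measure.addHaar_image_homothety]
  simp only [finrank_euclideanSpace, Fintype.card_fin, hr]
  rw [ENNReal.ofReal_div_of_pos (by norm_num), ENNReal.div_eq_inv_mul, ENNReal.div_eq_inv_mul]
  simp

theorem tri_perm (a b c : E2) : tri a b c = tri b c a := by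
  unfold tri
  congr 1
  ext x; simp; tauto

/-- The four closed subtriangles of the red refinement of a nondegenerate triangle
`T = conv(v1,v2,v3)` have pairwise disjoint interiors, their union is `T`, and each
has area (two-dimensional Lebesgue measure) equal to one quarter of the area of `T`. -/
theorem stmt1 (v1 v2 v3 m12 m23 m13 : E2)
    (hT : AffineIndependent ℝ ![v1, v2, v3])
    (hm12 : m12 = midpoint ℝ v1 v2) (hm23 : m23 = midpoint ℝ v2 v3)
    (hm13 : m13 = midpoint ℝ v1 v3)
    (T1 T2 T3 T4 : Set E2)
    (hT1 : T1 = tri v1 m12 m13) (hT2 : T2 = tri m12 v2 m23)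
    (hT3 : T3 = tri m13 m23 v3) (hT4 : T4 = tri m12 m23 m13) :
    (Disjoint (interior T1) (interior T2) ∧ Disjoint (interior T1) (interior T3) ∧
      Disjoint (interior T1) (interior T4) ∧ Disjoint (interior T2) (interior T3) ∧
      Disjoint (interior T2) (interior T4) ∧ Disjoint (interior T3) (interior T4)) ∧
    T1 ∪ T2 ∪ T3 ∪ T4 = tri v1 v2 v3 ∧
    (volume T1 = volume (tri v1 v2 v3) / 4 ∧ volume T2 = volume (tri v1 v2 v3) / 4 ∧
      volume T3 = volume (tri v1 v2 v3) / 4 ∧ volume T4 = volume (tri v1 v2 v3) / 4) := by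
  have hspan : affineSpan ℝ (Set.range ![v1, v2, v3]) = ⊤ := by
    rw [hT.affineSpan_eq_top_iff_card_eq_finrank_add_one]
    simp
  let bs : AffineBasis (Fin 3) ℝ E2 := ⟨![v1, v2, v3], hT, hspan⟩
  have hv1 : bs 0 = v1 := rfl
  have hv2 : bs 1 = v2 := rfl
  have hv3 : bs 2 = v3 := rfl
  have c00 : bs.coord 0 v1 = 1 := by rw [← hv1]; simp
  have c01 : bs.coord 0 v2 = 0 := by rw [← hv2]; simp
  have c02 : bs.coord 0 v3 = 0 := by rw [← hv3]; simp
  have c10 : bs.coord 1 v1 = 0 := by rw [← hv1]; simp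
  have c11 : bs.coord 1 v2 = 1 := by rw [← hv2]; simp
  have c12 : bs.coord 1 v3 = 0 := by rw [← hv3]; simp
  have c20 : bs.coord 2 v1 = 0 := by rw [← hv1]; simp
  have c21 : bs.coord 2 v2 = 0 := by rw [← hv2]; simp
  have c22 : bs.coord 2 v3 = 1 := by rw [← hv3]; simp
  have cm : ∀ i a b, bs.coord i (midpoint ℝ a b) = (bs.coord i a + bs.coord i b) / 2 := by
    intro i a b
    rw [AffineMap.map_midpoint, midpoint_eq_smul_add, smul_eq_mul]
    simp; ring
  subst hT1 hT2 hT3 hT4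
  refine ⟨⟨?_, ?_, ?_, ?_, ?_, ?_⟩, ?_, ?_, ?_, ?_, ?_⟩
  · exact disj_of_sep (bs.coord 0) v1 v2 c00 c01 _ _
      (by apply g_tri_ge <;> simp only [hm12, hm23, hm13, cm, c00, c01, c02] <;> norm_num)
      (by apply g_tri_le <;> simp only [hm12, hm23, hm13, cm, c00, c01, c02] <;> norm_num)
  · exact disj_of_sep (bs.coord 0) v1 v2 c00 c01 _ _
      (by apply g_tri_ge <;> simp only [hm12, hm23, hm13, cm, c00, c01, c02] <;> norm_num)
      (by apply g_tri_le <;> simp only [hm12, hm23, hm13, cm, c00, c01, c02] <;> norm_num)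
  · exact disj_of_sep (bs.coord 0) v1 v2 c00 c01 _ _
      (by apply g_tri_ge <;> simp only [hm12, hm23, hm13, cm, c00, c01, c02] <;> norm_num)
      (by apply g_tri_le <;> simp only [hm12, hm23, hm13, cm, c00, c01, c02] <;> norm_num)
  · exact disj_of_sep (bs.coord 1) v2 v1 c11 c10 _ _
      (by apply g_tri_ge <;> simp only [hm12, hm23, hm13, cm, c10, c11, c12] <;> norm_num)
      (by apply g_tri_le <;> simp only [hm12, hm23, hm13, cm, c10, c11, c12] <;> norm_num)
  · exact disj_of_sep (bs.coord 1) v2 v1 c11 c10 _ _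
      (by apply g_tri_ge <;> simp only [hm12, hm23, hm13, cm, c10, c11, c12] <;> norm_num)
      (by apply g_tri_le <;> simp only [hm12, hm23, hm13, cm, c10, c11, c12] <;> norm_num)
  · exact disj_of_sep (bs.coord 2) v3 v1 c22 c20 _ _
      (by apply g_tri_ge <;> simp only [hm12, hm23, hm13, cm, c20, c21, c22] <;> norm_num)
      (by apply g_tri_le <;> simp only [hm12, hm23, hm13, cm, c20, c21, c22] <;> norm_num)
  · have hc : Convex ℝ (tri v1 v2 v3) := convex_convexHull ℝ _
    have h1 : v1 ∈ tri v1 v2 v3 := subset_convexHull ℝ _ (by simp)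
    have h2 : v2 ∈ tri v1 v2 v3 := subset_convexHull ℝ _ (by simp)
    have h3 : v3 ∈ tri v1 v2 v3 := subset_convexHull ℝ _ (by simp)
    have k1 : m12 ∈ tri v1 v2 v3 := hm12 ▸ hc.midpoint_mem h1 h2
    have k2 : m23 ∈ tri v1 v2 v3 := hm23 ▸ hc.midpoint_mem h2 h3
    have k3 : m13 ∈ tri v1 v2 v3 := hm13 ▸ hc.midpoint_mem h1 h3
    apply Set.Subset.antisymm
    · have key : ∀ a b c, a ∈ tri v1 v2 v3 → b ∈ tri v1 v2 v3 → c ∈ tri v1 v2 v3 →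
          tri a b c ⊆ tri v1 v2 v3 := by
        intro a b c ha hb hc'
        exact convexHull_min (by rintro x (rfl | rfl | rfl) <;> assumption) hc
      exact Set.union_subset (Set.union_subset (Set.union_subset (key _ _ _ h1 k1 k3)
        (key _ _ _ k1 h2 k2)) (key _ _ _ k3 k2 h3)) (key _ _ _ k1 k2 k3)
    · intro x hx
      obtain ⟨α, β, γ, ha, hb, hg, hs, rfl⟩ := (mem_tri_iff _ _ _ _).1 hx
      rw [mid_eq] at hm12 hm23 hm13
      by_cases h1 : 1 / 2 ≤ α
      · refine Or.inl (Or.inl (Or.inl ((mem_tri_iff _ _ _ _).2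
          ⟨2 * α - 1, 2 * β, 2 * γ, by linarith, by linarith, by linarith, by linarith, ?_⟩)))
        obtain rfl : α = 1 - β - γ := by linarith
        rw [hm12, hm13]; module
      by_cases h2 : 1 / 2 ≤ β
      · refine Or.inl (Or.inl (Or.inr ((mem_tri_iff _ _ _ _).2
          ⟨2 * α, 2 * β - 1, 2 * γ, by linarith, by linarith, by linarith, by linarith, ?_⟩)))
        obtain rfl : α = 1 - β - γ := by linarith
        rw [hm12, hm23]; module
      by_cases h3 : 1 / 2 ≤ γ
      · refine Or.inl (Or.inr ((mem_tri_iff _ _ _ _).2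
          ⟨2 * α, 2 * β, 2 * γ - 1, by linarith, by linarith, by linarith, by linarith, ?_⟩))
        obtain rfl : α = 1 - β - γ := by linarith
        rw [hm13, hm23]; module
      · push Not at h1 h2 h3
        refine Or.inr ((mem_tri_iff _ _ _ _).2
          ⟨1 - 2 * γ, 1 - 2 * α, 1 - 2 * β, by linarith, by linarith, by linarith,
            by linarith, ?_⟩)
        obtain rfl : α = 1 - β - γ := by linarith
        rw [hm12, hm13, hm23]; module
  · apply vol_homothety v1 _ _ _ _ _ _ (1 / 2) (by norm_num [abs_of_pos]) <;>
      simp only [hm12, hm13, hm23, mid_eq, AffineMap.homothety_apply, vsub_eq_sub,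
        vadd_eq_add] <;> module
  · apply vol_homothety v2 _ _ _ _ _ _ (1 / 2) (by norm_num [abs_of_pos]) <;>
      simp only [hm12, hm13, hm23, mid_eq, AffineMap.homothety_apply, vsub_eq_sub,
        vadd_eq_add] <;> module
  · apply vol_homothety v3 _ _ _ _ _ _ (1 / 2) (by norm_num [abs_of_pos]) <;>
      simp only [hm12, hm13, hm23, mid_eq, AffineMap.homothety_apply, vsub_eq_sub,
        vadd_eq_add] <;> module
  · rw [tri_perm]
    apply vol_homothety ((1 / 3 : ℝ) • (v1 + v2 + v3)) _ _ _ _ _ _ (-1 / 2)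
      (by norm_num [abs_of_pos]) <;>
      simp only [hm12, hm13, hm23, mid_eq, AffineMap.homothety_apply, vsub_eq_sub,
        vadd_eq_add] <;> module
end
end

section
/- Let T0 be a labeled triangle (an ordered triple of affinely independent points of ℝ²) with its reference edge. Then there exists θ0 > 0, depending only on T0, such that every newest vertex bisection descendant of T0 has minimal interior angle at least θ0; equivalently, the family of all triangles obtained from T0 by repeated newest vertex bisection is shape regular. -/
noncomputable section

open Metric

/-- The minimal interior angle of the triangle with vertices `a`, `b`, `c`. -/
def minAngle (a b c : E2) : ℝ :=
  min (min (EuclideanGeometry.angle b a c) (EuclideanGeometry.angle a b c))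
    (EuclideanGeometry.angle a c b)

/-- The inradius of a set: the supremum of radii of open balls contained in it. -/
def inradius (A : Set E2) : ℝ := sSup {r : ℝ | ∃ x : E2, ball x r ⊆ A}

/-- The two children of a labeled triangle `(v1, v2, v3)` (reference edge `[v1, v2]`)
produced by newest vertex bisection: `(v3, v1, m)` and `(v2, v3, m)`, where `m` is the
midpoint of `v1` and `v2`. -/
def nvbChildren (t : E2 × E2 × E2) : Set (E2 × E2 × E2) :=
  {(t.2.2, t.1, midpoint ℝ t.1 t.2.1), (t.2.1, t.2.2, midpoint ℝ t.1 t.2.1)}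

/-- `NVBDesc t s`: `s` is a newest-vertex-bisection descendant of the labeled triangle
`t`. -/
def NVBDesc : E2 × E2 × E2 → E2 × E2 × E2 → Prop :=
  Relation.ReflTransGen (fun t s => s ∈ nvbChildren t)

/-- Twice the signed area. -/
def crs (a b c : E2) : ℝ := (b 0 - a 0) * (c 1 - a 1) - (b 1 - a 1) * (c 0 - a 0)

/-- Sum of squared lengths of the two edges at the newest vertex. -/
def nsq (a b c : E2) : ℝ :=
  (c 0 - a 0) ^ 2 + (c 1 - a 1) ^ 2 + (c 0 - b 0) ^ 2 + (c 1 - b 1) ^ 2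

theorem mid_apply (a b : E2) (i : Fin 2) : (midpoint ℝ a b) i = (a i + b i) / 2 := by
  rw [midpoint_eq_smul_add]
  simp
  ring

theorem dist_sq' (a b : E2) : dist a b ^ 2 = (a 0 - b 0) ^ 2 + (a 1 - b 1) ^ 2 := by
  rw [EuclideanSpace.dist_sq_eq]
  simp [Fin.sum_univ_two, Real.dist_eq, sq_abs]

theorem crs_ne_zero (a b c : E2) (h : AffineIndependent ℝ ![a, b, c]) : crs a b c ≠ 0 := by
  intro h0
  unfold crs at h0
  rw [affineIndependent_iff] at h
  have key : ∀ x y z : ℝ, x + y + z = 0 → (∀ i, x * a i + y * b i + z * c i = 0) →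
      x = 0 ∧ y = 0 ∧ z = 0 := by
    intro x y z h1 h2
    have := h Finset.univ ![x, y, z] (by simp [Fin.sum_univ_three, h1]) (by
      ext i
      simpa [Fin.sum_univ_three] using h2 i)
    exact ⟨this 0 (by simp), this 1 (by simp), this 2 (by simp)⟩
  obtain ⟨-, k1, k2⟩ := key (-((c 1 - a 1) - (b 1 - a 1))) (c 1 - a 1) (-(b 1 - a 1)) (by ring) (by
    rw [Fin.forall_fin_two]; constructor <;> linarith)
  obtain ⟨-, k3, k4⟩ := key (-((c 0 - a 0) - (b 0 - a 0))) (c 0 - a 0) (-(b 0 - a 0)) (by ring) (by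
    rw [Fin.forall_fin_two]; constructor <;> linarith)
  obtain ⟨k5, -, -⟩ := key (-1) 1 0 (by ring) (by
    rw [Fin.forall_fin_two]; constructor <;> linarith)
  norm_num at k5

theorem desc_inv (v1 v2 v3 : E2) (hT : crs v1 v2 v3 ≠ 0) (t : E2 × E2 × E2)
    (h : NVBDesc (v1, v2, v3) t) :
    crs t.1 t.2.1 t.2.2 ≠ 0 ∧ nsq t.1 t.2.1 t.2.2 =
      nsq v1 v2 v3 / |crs v1 v2 v3| * |crs t.1 t.2.1 t.2.2| := by
  unfold NVBDesc at h
  induction h with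
  | refl =>
    refine ⟨hT, ?_⟩
    have : |crs v1 v2 v3| ≠ 0 := abs_ne_zero.mpr hT
    simp only
    field_simp
  | @tail s t _ hst ih =>
    obtain ⟨a, b, c⟩ := s
    obtain ⟨h1, h2⟩ := ih
    simp only at h1 h2
    have half : |crs a b c / 2| = |crs a b c| / 2 := by rw [abs_div]; norm_num
    rcases hst with hst | hst
    · have e1 : crs t.1 t.2.1 t.2.2 = crs a b c / 2 := by
        rw [hst]; simp only [crs, mid_apply]; ring
      have e2 : nsq t.1 t.2.1 t.2.2 = nsq a b c / 2 := by
        rw [hst]; simp only [nsq, mid_apply]; ring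
      rw [e1, e2, half, h2]
      exact ⟨by positivity, by ring⟩
    · have e1 : crs t.1 t.2.1 t.2.2 = crs a b c / 2 := by
        rw [hst]; simp only [crs, mid_apply]; ring
      have e2 : nsq t.1 t.2.1 t.2.2 = nsq a b c / 2 := by
        rw [hst]; simp only [nsq, mid_apply]; ring
      rw [e1, e2, half, h2]
      exact ⟨by positivity, by ring⟩

theorem angle_ge (a b c : E2) (L : ℝ) (hD : crs a b c ≠ 0) (h1 : dist b a ≤ L)
    (h2 : dist c a ≤ L) : |crs a b c| / L ^ 2 ≤ EuclideanGeometry.angle b a c := by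
  have hs := InnerProductGeometry.sin_angle_mul_norm_mul_norm (b -ᵥ a) (c -ᵥ a)
  have e : inner ℝ (b -ᵥ a) (b -ᵥ a) * inner ℝ (c -ᵥ a) (c -ᵥ a) -
      inner ℝ (b -ᵥ a) (c -ᵥ a) * inner ℝ (b -ᵥ a) (c -ᵥ a) = (crs a b c) ^ 2 := by
    simp only [PiLp.inner_apply, Fin.sum_univ_two, crs, vsub_eq_sub, PiLp.sub_apply, real_inner_eq_re_inner, RCLike.inner_apply, conj_trivial, RCLike.re_to_real]
    ring
  rw [e, Real.sqrt_sq_eq_abs] at hs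
  have h0 : 0 ≤ EuclideanGeometry.angle b a c := EuclideanGeometry.angle_nonneg _ _ _
  have hsin : Real.sin (InnerProductGeometry.angle (b -ᵥ a) (c -ᵥ a)) ≤
      EuclideanGeometry.angle b a c := Real.sin_le h0
  rw [← dist_eq_norm_vsub, ← dist_eq_norm_vsub] at hs
  have hL : 0 ≤ L := dist_nonneg.trans h1
  rw [← hs]
  apply div_le_of_le_mul₀ (by positivity) h0
  have : dist b a * dist c a ≤ L ^ 2 := by
    rw [pow_two]; exact mul_le_mul h1 h2 dist_nonneg hL
  exact mul_le_mul hsin this (by positivity) h0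

theorem mem_tri (a b c p : E2) (x y z : ℝ) (hx : 0 ≤ x) (hy : 0 ≤ y) (hz : 0 ≤ z)
    (h1 : x + y + z = 1) (hp : ∀ i, p i = x * a i + y * b i + z * c i) : p ∈ tri a b c := by
  have e : p = x • a + y • b + z • c := by
    ext i; simpa using hp i
  have ha : a ∈ tri a b c := subset_convexHull ℝ _ (by simp)
  have hb : b ∈ tri a b c := subset_convexHull ℝ _ (by simp)
  have hc : c ∈ tri a b c := subset_convexHull ℝ _ (by simp)
  have := (convex_convexHull ℝ {a, b, c}).sum_mem (t := Finset.univ) (w := ![x, y, z])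
    (z := ![a, b, c]) (by intro i _; fin_cases i <;> simpa)
    (by simpa [Fin.sum_univ_three] using h1) (by intro i _; fin_cases i <;> assumption)
  rw [e, tri]
  simpa [Fin.sum_univ_three] using this

/-- Cauchy-Schwarz in the form needed. -/
theorem cs_bound (p q r s L d D : ℝ) (hL : 0 < L) (hd : 0 ≤ d) (h1 : p ^ 2 + q ^ 2 ≤ d ^ 2)
    (h2 : r ^ 2 + s ^ 2 ≤ L ^ 2) (h3 : d * L ≤ |D| / 3) : |p * s - q * r| ≤ |D| / 3 := by
  refine le_trans ?_ h3
  apply abs_le_of_sq_le_sq _ (by positivity)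
  have : (p ^ 2 + q ^ 2) * (r ^ 2 + s ^ 2) ≤ d ^ 2 * L ^ 2 :=
    mul_le_mul h1 h2 (by positivity) (by positivity)
  nlinarith [sq_nonneg (p * r + q * s)]

theorem coord_nonneg (D e : ℝ) (hD : D ≠ 0) (h : |e| ≤ |D| / 3) : 0 ≤ 1 / 3 + e / D := by
  have : |e / D| ≤ 1 / 3 := by
    rw [abs_div, div_le_iff₀ (abs_pos.mpr hD)]; linarith
  linarith [(abs_le.mp this).1]

theorem ball_sub_tri (a b c : E2) (L : ℝ) (hD : crs a b c ≠ 0) (hL : 0 < L) (h1 : dist b a ≤ L)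
    (h2 : dist c a ≤ L) (h3 : dist c b ≤ L) :
    ∃ g : E2, ball g (|crs a b c| / (3 * L)) ⊆ tri a b c := by
  refine ⟨!₂[(a 0 + b 0 + c 0) / 3, (a 1 + b 1 + c 1) / 3], ?_⟩
  intro p hp
  rw [mem_ball] at hp
  set g : E2 := !₂[(a 0 + b 0 + c 0) / 3, (a 1 + b 1 + c 1) / 3] with hg
  have g0 : g 0 = (a 0 + b 0 + c 0) / 3 := by simp [hg]
  have g1 : g 1 = (a 1 + b 1 + c 1) / 3 := by simp [hg]
  have hdL : dist p g * L ≤ |crs a b c| / 3 := by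
    rw [lt_div_iff₀ (by positivity)] at hp
    linarith
  have hpg := (dist_sq' p g).ge
  have key : ∀ u v : E2, dist u v ≤ L →
      |(p 0 - g 0) * (u 1 - v 1) - (p 1 - g 1) * (u 0 - v 0)| ≤ |crs a b c| / 3 := by
    intro u v huv
    apply cs_bound _ _ _ _ L (dist p g) _ hL dist_nonneg hpg _ hdL
    rw [← dist_sq']
    exact pow_le_pow_left₀ dist_nonneg huv 2
  have k1 := coord_nonneg _ _ hD (key b c (by rwa [dist_comm]))
  have k2 := coord_nonneg _ _ hD (key c a h2)
  have k3 := coord_nonneg _ _ hD (key a b (by rwa [dist_comm]))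
  refine mem_tri a b c p _ _ _ k1 k2 k3 ?_ ?_
  · field_simp; ring
  · have hD' := hD
    rw [Fin.forall_fin_two]
    constructor
    · rw [g0, g1]; field_simp; simp only [crs]; ring
    · rw [g0, g1]; field_simp; simp only [crs]; ring

theorem diam_tri_le (a b c : E2) (L : ℝ) (h1 : dist b a ≤ L)
    (h2 : dist c a ≤ L) (h3 : dist c b ≤ L) : diam (tri a b c) ≤ L := by
  have hL : 0 ≤ L := dist_nonneg.trans h1
  unfold tri
  rw [convexHull_diam]
  apply diam_le_of_forall_dist_le hL
  intro x hx y hy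
  simp only [Set.mem_insert_iff, Set.mem_singleton_iff] at hx hy
  rcases hx with rfl | rfl | rfl <;> rcases hy with rfl | rfl | rfl <;>
    first
    | (rw [dist_self]; exact hL)
    | assumption
    | (rw [dist_comm]; assumption)

theorem inradius_ge (A : Set E2) (hA : Bornology.IsBounded A) (g : E2) (r : ℝ)
    (h : ball g r ⊆ A) : r ≤ inradius A := by
  unfold inradius
  refine le_csSup ?_ ⟨g, h⟩
  refine ⟨max 0 (diam A), ?_⟩
  rintro s ⟨x, hx⟩
  rcases le_or_gt s 0 with hs | hs
  · exact hs.trans (le_max_left _ _)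
  refine le_trans ?_ (le_max_right _ _)
  have hn : ‖(EuclideanSpace.single 0 (s / 2) : E2)‖ = s / 2 := by
    simp [abs_of_pos hs]
  have m1 : x + EuclideanSpace.single 0 (s / 2) ∈ A := hx (by
    rw [mem_ball, dist_eq_norm, add_sub_cancel_left, hn]; linarith)
  have m2 : x - EuclideanSpace.single 0 (s / 2) ∈ A := hx (by
    rw [mem_ball, dist_eq_norm, sub_sub_cancel_left, norm_neg, hn]; linarith)
  have := dist_le_diam_of_mem hA m1 m2
  rw [dist_eq_norm, add_sub_sub_cancel, ← two_smul ℝ, norm_smul, hn] at this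
  norm_num at this
  linarith

/-- There is `θ0 > 0`, depending only on the labeled triangle `T0 = (v1, v2, v3)`, such
that every newest-vertex-bisection descendant of `T0` has minimal interior angle at least
`θ0`; equivalently, the family of all NVB descendants of `T0` is shape regular: there is
`c ≥ 1` bounding `h_T / ρ_T` for all descendants `T`. -/
theorem stmt4 (v1 v2 v3 : E2) (hT : AffineIndependent ℝ ![v1, v2, v3]) :
    (∃ θ0 : ℝ, 0 < θ0 ∧ ∀ t : E2 × E2 × E2, NVBDesc (v1, v2, v3) t →
        θ0 ≤ minAngle t.1 t.2.1 t.2.2) ∧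
    (∃ c : ℝ, 1 ≤ c ∧ ∀ t : E2 × E2 × E2, NVBDesc (v1, v2, v3) t →
        diam (tri t.1 t.2.1 t.2.2) / inradius (tri t.1 t.2.1 t.2.2) ≤ c) := by
  have hT' := crs_ne_zero v1 v2 v3 hT
  have hDpos : 0 < |crs v1 v2 v3| := abs_pos.mpr hT'
  set K := nsq v1 v2 v3 / |crs v1 v2 v3| with hK
  have edges : ∀ t : E2 × E2 × E2, NVBDesc (v1, v2, v3) t → crs t.1 t.2.1 t.2.2 ≠ 0 ∧
      ∃ L : ℝ, 0 < L ∧ L ^ 2 = 2 * K * |crs t.1 t.2.1 t.2.2| ∧ dist t.2.1 t.1 ≤ L ∧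
        dist t.2.2 t.1 ≤ L ∧ dist t.2.2 t.2.1 ≤ L := by
    rintro ⟨a, b, c⟩ ht
    obtain ⟨h1, h2⟩ := desc_inv v1 v2 v3 hT' _ ht
    rw [← hK] at h2
    simp only at h1 h2 ⊢
    have hnn : 0 ≤ nsq a b c := by unfold nsq; positivity
    have hn0 : nsq a b c ≠ 0 := by
      intro h0
      unfold nsq at h0
      have x1 : c 0 - a 0 = 0 := by
        apply pow_eq_zero_iff (two_ne_zero) |>.mp
        nlinarith [sq_nonneg (c 0 - a 0), sq_nonneg (c 1 - a 1), sq_nonneg (c 0 - b 0),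
          sq_nonneg (c 1 - b 1)]
      have x2 : c 1 - a 1 = 0 := by
        apply pow_eq_zero_iff (two_ne_zero) |>.mp
        nlinarith [sq_nonneg (c 0 - a 0), sq_nonneg (c 1 - a 1), sq_nonneg (c 0 - b 0),
          sq_nonneg (c 1 - b 1)]
      apply h1
      unfold crs
      rw [x1, x2]; ring
    have hnp : 0 < nsq a b c := lt_of_le_of_ne hnn hn0.symm
    have hsq : Real.sqrt (2 * nsq a b c) ^ 2 = 2 * nsq a b c := Real.sq_sqrt (by positivity)
    refine ⟨h1, Real.sqrt (2 * nsq a b c), Real.sqrt_pos.mpr (by positivity), ?_, ?_, ?_, ?_⟩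
    · rw [hsq, h2]; ring
    · apply Real.le_sqrt_of_sq_le
      rw [dist_sq']; unfold nsq
      nlinarith [sq_nonneg (c 0 - a 0 + (c 0 - b 0)), sq_nonneg (c 1 - a 1 + (c 1 - b 1))]
    · apply Real.le_sqrt_of_sq_le
      rw [dist_sq']; unfold nsq
      nlinarith [sq_nonneg (c 0 - a 0), sq_nonneg (c 1 - a 1), sq_nonneg (c 0 - b 0),
        sq_nonneg (c 1 - b 1)]
    · apply Real.le_sqrt_of_sq_le
      rw [dist_sq']; unfold nsq
      nlinarith [sq_nonneg (c 0 - a 0), sq_nonneg (c 1 - a 1), sq_nonneg (c 0 - b 0),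
        sq_nonneg (c 1 - b 1)]
  have hKpos : 0 < K := by
    obtain ⟨h1, L, hL, h2, -⟩ := edges _ Relation.ReflTransGen.refl
    simp only at h1 h2
    have : 0 < 2 * K * |crs v1 v2 v3| := by rw [← h2]; positivity
    have := pos_of_mul_pos_left this hDpos.le
    linarith
  constructor
  · refine ⟨1 / (2 * K), by positivity, ?_⟩
    rintro ⟨a, b, c⟩ ht
    obtain ⟨h1, L, hL, h2, e1, e2, e3⟩ := edges _ ht
    simp only at h1 h2 e1 e2 e3 ⊢
    have hp : 0 < |crs a b c| := abs_pos.mpr h1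
    have hval : 1 / (2 * K) = |crs a b c| / L ^ 2 := by
      rw [h2]; field_simp
    have s1 : crs b a c = - crs a b c := by unfold crs; ring
    have s2 : crs c a b = crs a b c := by unfold crs; ring
    rw [hval]
    unfold minAngle
    refine le_min (le_min ?_ ?_) ?_
    · exact angle_ge a b c L h1 e1 e2
    · have := angle_ge b a c L (by rw [s1]; exact neg_ne_zero.mpr h1)
        (by rwa [dist_comm]) e3
      rwa [s1, abs_neg] at this
    · have := angle_ge c a b L (by rwa [s2]) (by rwa [dist_comm]) (by rwa [dist_comm])
      rwa [s2] at this
  · refine ⟨max 1 (6 * K), le_max_left _ _, ?_⟩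
    rintro ⟨a, b, c⟩ ht
    obtain ⟨h1, L, hL, h2, e1, e2, e3⟩ := edges _ ht
    simp only at h1 h2 e1 e2 e3 ⊢
    have hp : 0 < |crs a b c| := abs_pos.mpr h1
    refine le_trans ?_ (le_max_right _ _)
    obtain ⟨g, hg⟩ := ball_sub_tri a b c L h1 hL e1 e2 e3
    have hb : Bornology.IsBounded (tri a b c) :=
      isBounded_convexHull.mpr (Set.toFinite {a, b, c}).isBounded
    have hin := inradius_ge _ hb g _ hg
    have hr : 0 < |crs a b c| / (3 * L) := by positivity
    calc diam (tri a b c) / inradius (tri a b c) ≤ L / (|crs a b c| / (3 * L)) :=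
          div_le_div₀ hL.le (diam_tri_le a b c L e1 e2 e3) hr hin
      _ = 3 * L ^ 2 / |crs a b c| := by field_simp
      _ = 6 * K := by rw [h2]; field_simp; ring
end
end
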